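/- arXiv:1112.4555 — 3 statements merged into one kernel-verified Lean document; each statement's English description precedes it below -/
import Mathlib

section
/- Let L be a finite group generated by two elements x and y, let E = L × ⋯ × L (t copies), and let k be an algebraically closed field. Let V = U_1 ⊗ ⋯ ⊗ U_t be a nontrivial irreducible kE-module (each U_i an irreducible kL-module) with dim U_i ≥ 4 for some i. Let G be the diagonal copy of L in E, and let x_1, y_1, z_1 ∈ G be the diagonal elements with coordinates x, y, and z = (xy)^{-1} respectively. Then dim C_V(x_1) + dim C_V(y_1) + dim C_V(z_1) ≤ (9/8)·dim V; in particular, the minimum of the three fixed-space dimensions is at most (3/8)·dim V. -/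
/-! Write `V = U_1 ⊗ ⋯ ⊗ U_t` and let `U_i` be a factor of dimension `d ≥ 4`.  The full matrix
algebra `M_d(k) ≅ End U_i` acts on `V` through the `i`-th slot, and a diagonal element `g` acts as
the product of `ρ_i(g)` in that slot with an operator on the other slots that commutes with the
matrix algebra.

Two facts give the bound.

* `mul_finrank_le`: since `ρ_i` is irreducible and `k` is algebraically closed, the operators
  `ρ_i(g)` span `End U_i` (Burnside's theorem, `span_range_eq_top`).  From this the map
  `M_d(k) ⊗ F → V`, `T ⊗ f ↦ T f`, is injective on the space `F` of diagonal fixed vectors, so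
  `d² dim F ≤ dim V`.  The transposed action gives the same inequality for the fixed
  functionals in the dual space.  Thus both invariant spaces have dimension at most `dim V / 16`.
* `scott_lemma`: Scott's inequality for two operators `X`, `Y` and their product.

Together they bound the sum of the three fixed-space dimensions by
`dim V + dim V / 16 + dim V / 16`.
-/

open Module
open scoped TensorProduct

/-- The tensor-product representation of `E = L × ⋯ × L` on `U_1 ⊗ ⋯ ⊗ U_t`. -/
noncomputable def piTensorRep {k L : Type*} [Field k] [Group L] {t : ℕ}
    {U : Fin t → Type*} [∀ i, AddCommGroup (U i)] [∀ i, Module k (U i)]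
    (ρ : ∀ i, Representation k L (U i)) :
    Representation k (Fin t → L) (⨂[k] i, U i) where
  toFun f := PiTensorProduct.map fun i => ρ i (f i)
  map_one' := by
    simp only [Pi.one_apply, map_one]
    exact PiTensorProduct.map_id
  map_mul' f g := by
    simp only [Pi.mul_apply, map_mul]
    exact PiTensorProduct.map_comp (fun i => ρ i (f i)) (fun i => ρ i (g i))

/-- **Burnside's theorem** for group representations: over an algebraically closed field the
operators of an irreducible finite-dimensional representation span all endomorphisms. It follows
from the Jacobson density theorem and Schur's lemma. -/
theorem span_range_eq_top {k L U : Type*} [Field k] [IsAlgClosed k] [Group L]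
    [AddCommGroup U] [Module k U] [FiniteDimensional k U] [Nontrivial U]
    (ρ : Representation k L U)
    (hirr : ∀ W : Submodule k U, (∀ g v, v ∈ W → ρ g v ∈ W) → W = ⊥ ∨ W = ⊤) :
    Submodule.span k (Set.range ρ) = ⊤ := by
  let A : Subalgebra k (Module.End k U) := Algebra.adjoin k (Set.range ρ)
  have hρA : ∀ g, ρ g ∈ A := fun g => Algebra.subset_adjoin ⟨g, rfl⟩
  have hsimple : IsSimpleModule A U := by
    refine isSimpleModule_iff _ _ |>.mpr ?_
    refine { eq_bot_or_eq_top := fun W => ?_ }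
    rcases hirr (W.restrictScalars k) (fun g v hv => W.smul_mem ⟨ρ g, hρA g⟩ hv) with h | h
    · left
      simpa using h
    · right
      simpa using h
  have hschur := (IsSimpleModule.algebraMap_end_bijective_of_isAlgClosed (A := A) (V := U) k).2
  have hA : A = ⊤ := by
    rw [eq_top_iff]
    intro T _
    -- By Schur's lemma `T` is linear over the commutant of `A`, so the density theorem applies.
    let f : Module.End (Module.End A U) U :=
      { toFun := T
        map_add' := T.map_add
        map_smul' := by
          intro c v
          obtain ⟨c, rfl⟩ := hschur c
          simp }
    classical
    let b := Module.finBasis k U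
    obtain ⟨r, hr⟩ := jacobson_density f (Finset.univ.image b)
    have hT : T = (r : Module.End k U) := by
      refine b.ext fun j => ?_
      exact hr (b j) (Finset.mem_image_of_mem _ (Finset.mem_univ _))
    rw [hT]
    exact r.2
  have h1 : Subalgebra.toSubmodule A = Submodule.span k (Set.range ρ) := by
    have h2 : (Submonoid.closure (Set.range ρ) : Set (Module.End k U)) = Set.range ρ := by
      rw [← MonoidHom.coe_mrange, Submonoid.closure_eq]
    rw [Algebra.adjoin_eq_span, h2]
  rw [← h1, hA, Algebra.top_toSubmodule]

/-- Let `M_n(k)` act on `V`, and let `F` be a subspace on which each of a spanning family of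
matrices `r g` acts like an operator `b g` commuting with the matrix action. Then the map
`M_n(k) ⊗ F → V` is injective, whence `n² dim F ≤ dim V`. -/
theorem mul_finrank_le {k L V n : Type*} [Field k] [AddCommGroup V] [Module k V]
    [FiniteDimensional k V] [Fintype n] [DecidableEq n]
    (α : Matrix n n k →ₐ[k] Module.End k V) (r : L → Matrix n n k) (b : L → Module.End k V)
    (hspan : Submodule.span k (Set.range r) = ⊤)
    (hcomm : ∀ g M v, α M (b g v) = b g (α M v))
    (F : Submodule k V) (hF : ∀ g, ∀ f ∈ F, α (r g) f = b g f) :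
    Fintype.card n * (Fintype.card n * finrank k F) ≤ finrank k V := by
  let μ : (n → n → F) →ₗ[k] V :=
    ∑ p, ∑ q, (α (Matrix.single p q 1)) ∘ₗ F.subtype ∘ₗ (LinearMap.proj q) ∘ₗ (LinearMap.proj p)
  have hμ : ∀ c, μ c = ∑ p, ∑ q, α (Matrix.single p q 1) (c p q : V) := by
    intro c
    simp [μ, LinearMap.sum_apply]
  have hinj : Function.Injective μ := by
    rw [← LinearMap.ker_eq_bot, LinearMap.ker_eq_bot']
    intro c hc
    rw [hμ] at hc
    -- Left multiplication by `E_{ap}` isolates row `p` of the coefficients.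
    have h1 : ∀ a p, ∑ q, α (Matrix.single a q 1) (c p q : V) = 0 := by
      intro a p
      have h := congrArg (α (Matrix.single a p 1)) hc
      rw [map_zero, map_sum, Finset.sum_eq_single p] at h
      · simpa only [map_sum, ← Module.End.mul_apply, ← map_mul, Matrix.single_mul_single_same,
          one_mul] using h
      · intro p' _ hp
        simp only [map_sum, ← Module.End.mul_apply, ← map_mul]
        rw [Finset.sum_eq_zero]
        intro q _
        rw [Matrix.single_mul_single_of_ne _ _ _ _ (Ne.symm hp)]
        simp
      · simp
    -- Right multiplication by `r g` preserves the relation, hence so does that by any matrix.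
    have h2 : ∀ (M : Matrix n n k) a p, ∑ q, α (Matrix.single a q 1 * M) (c p q : V) = 0 := by
      intro M a p
      have hM : M ∈ Submodule.span k (Set.range r) := hspan ▸ Submodule.mem_top
      induction hM using Submodule.span_induction with
      | mem M hM =>
        obtain ⟨g, rfl⟩ := hM
        have h := congrArg (b g) (h1 a p)
        rw [map_zero, map_sum] at h
        rw [← h]
        refine Finset.sum_congr rfl fun q _ => ?_
        rw [map_mul, Module.End.mul_apply, hF g _ (c p q).2, hcomm]
      | zero => simp
      | add M N _ _ hM hN =>
        simp only [mul_add, map_add, LinearMap.add_apply, Finset.sum_add_distrib, hM, hN, add_zero]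
      | smul s M _ hM =>
        simp only [mul_smul_comm, map_smul, LinearMap.smul_apply, ← Finset.smul_sum, hM,
          smul_zero]
    have h3 : ∀ p q a, α (Matrix.single a a 1) (c p q : V) = 0 := by
      intro p q a
      have h := h2 (Matrix.single q a 1) a p
      rw [Finset.sum_eq_single q] at h
      · simpa using h
      · intro q' _ hq
        rw [Matrix.single_mul_single_of_ne _ _ _ _ hq]
        simp
      · simp
    ext p q
    have hone : (1 : Matrix n n k) = ∑ a, Matrix.single a a 1 := by
      ext u v
      simp [Matrix.sum_apply, Matrix.single_apply, Matrix.one_apply, ite_and]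
    have h4 : α 1 (c p q : V) = 0 := by
      rw [hone, map_sum, LinearMap.sum_apply]
      exact Finset.sum_eq_zero fun a _ => h3 p q a
    simpa using h4
  have h := LinearMap.finrank_le_finrank_of_injective hinj
  simpa [Module.finrank_pi_fintype] using h

/-- `mul_finrank_le` for functionals. A functional `φ` is acted on by `M` as `φ ∘ α Mᵀ`, so that
`M_n(k)` acts on the dual space from the left. -/
theorem mul_finrank_dual_le {k L V n : Type*} [Field k] [AddCommGroup V] [Module k V]
    [FiniteDimensional k V] [Fintype n] [DecidableEq n]
    (α : Matrix n n k →ₐ[k] Module.End k V) (r : L → Matrix n n k) (b : L → Module.End k V)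
    (hspan : Submodule.span k (Set.range r) = ⊤)
    (hcomm : ∀ g M v, α M (b g v) = b g (α M v))
    (F : Submodule k (Dual k V)) (hF : ∀ g, ∀ f ∈ F, ∀ v, f (α (r g) v) = f (b g v)) :
    Fintype.card n * (Fintype.card n * finrank k F) ≤ finrank k V := by
  let α' : Matrix n n k →ₐ[k] Module.End k (Dual k V) := AlgHom.ofLinearMap
    ((Module.Dual.transpose (R := k) (M := V) (M' := V)) ∘ₗ α.toLinearMap ∘ₗ
      (Matrix.transposeLinearEquiv n n k k).toLinearMap)
    (by ext; simp [Module.Dual.transpose_apply])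
    (by intro M N; ext; simp [Module.Dual.transpose_apply])
  have hα' : ∀ M φ v, α' M φ v = φ (α M.transpose v) := fun _ _ _ => rfl
  rw [← Subspace.dual_finrank_eq (K := k) (V := V)]
  refine mul_finrank_le α' (fun g => (r g).transpose) (fun g => (b g).dualMap) ?_ ?_ F ?_
  · have h := congrArg (Submodule.map (Matrix.transposeLinearEquiv n n k k).toLinearMap) hspan
    rw [Submodule.map_span, Submodule.map_top, LinearEquiv.range, ← Set.range_comp] at h
    exact h
  · intro g M φ
    ext v
    simp [hα', hcomm]
  · intro g f hf
    ext v
    simpa [hα'] using hF g f hf v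

/-- **Scott's lemma** for two operators `X`, `Y` and their product: the common fixed space of `X`
and `Y` enters as `ker (X - 1) ⊓ ker (Y - 1)`, and the functionals fixed by both as the annihilator
of `range (X - 1) ⊔ range (Y - 1)`. The key point is that `Y - 1` maps `ker (X Y - 1)` into
`range (X - 1) ⊓ range (Y - 1)`, because `(X - 1) Y v = -(Y - 1) v` when `X Y v = v`. -/
theorem scott_lemma {k V : Type*} [Field k] [AddCommGroup V] [Module k V]
    [FiniteDimensional k V] (X Y : Module.End k V) :
    finrank k (LinearMap.ker (X - 1)) + finrank k (LinearMap.ker (Y - 1)) +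
      finrank k (LinearMap.ker (X * Y - 1)) ≤ finrank k V +
      finrank k (LinearMap.ker (X - 1) ⊓ LinearMap.ker (Y - 1) : Submodule k V) +
      finrank k (LinearMap.range (X - 1) ⊔ LinearMap.range (Y - 1)).dualAnnihilator := by
  have hx := LinearMap.finrank_range_add_finrank_ker (X - 1)
  have hy := LinearMap.finrank_range_add_finrank_ker (Y - 1)
  have hs := Submodule.finrank_sup_add_finrank_inf_eq
    (LinearMap.range (X - 1)) (LinearMap.range (Y - 1))
  have ha := Subspace.finrank_add_finrank_dualAnnihilator_eq
    (LinearMap.range (X - 1) ⊔ LinearMap.range (Y - 1))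
  let K := LinearMap.ker (X * Y - 1)
  let f : K →ₗ[k] V := (Y - 1) ∘ₗ K.subtype
  have hf := LinearMap.finrank_range_add_finrank_ker f
  have hK : ∀ v : K, X (Y v) = v := fun v => by
    have h := LinearMap.mem_ker.mp v.2
    rwa [LinearMap.sub_apply, Module.End.mul_apply, Module.End.one_apply, sub_eq_zero] at h
  have h1 : finrank k (LinearMap.range f) ≤
      finrank k (LinearMap.range (X - 1) ⊓ LinearMap.range (Y - 1) : Submodule k V) := by
    apply Submodule.finrank_mono
    rintro _ ⟨v, rfl⟩
    refine ⟨⟨-(Y v), ?_⟩, ⟨v, rfl⟩⟩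
    simp [f, hK]
    abel
  have h2 : finrank k (LinearMap.ker f) ≤
      finrank k (LinearMap.ker (X - 1) ⊓ LinearMap.ker (Y - 1) : Submodule k V) := by
    rw [← Submodule.finrank_map_subtype_eq K (LinearMap.ker f)]
    apply Submodule.finrank_mono
    rintro _ ⟨v, hv, rfl⟩
    have hyv : Y (v : V) = v := by simpa [f, sub_eq_zero] using hv
    have hxv : X (v : V) = v := by
      have h := hK v
      rwa [hyv] at h
    simp [hxv, hyv]
  change _ + finrank k K ≤ _
  omega

/-- The action of the endomorphisms of the `i`-th factor on a tensor product. -/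
noncomputable def slotHom {k : Type*} [Field k] {t : ℕ} {U : Fin t → Type*}
    [∀ i, AddCommGroup (U i)] [∀ i, Module k (U i)] (i : Fin t) :
    Module.End k (U i) →ₐ[k] Module.End k (⨂[k] i, U i) :=
  AlgHom.ofLinearMap ((PiTensorProduct.mapMultilinear k U U).toLinearMap 1 i)
    (by
      rw [MultilinearMap.toLinearMap_apply, show (1 : Module.End k (U i)) =
        (1 : ∀ j, Module.End k (U j)) i from rfl, Function.update_eq_self]
      exact PiTensorProduct.map_one)
    (by
      intro S T
      simp only [MultilinearMap.toLinearMap_apply, PiTensorProduct.mapMultilinear_apply]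
      rw [← PiTensorProduct.map_mul]
      congr 1
      ext1 j
      rcases eq_or_ne j i with rfl | h
      · simp
      · simp [h])

theorem slotHom_apply {k : Type*} [Field k] {t : ℕ} {U : Fin t → Type*}
    [∀ i, AddCommGroup (U i)] [∀ i, Module k (U i)] (i : Fin t) (T : Module.End k (U i)) :
    slotHom i T = PiTensorProduct.map (Function.update (1 : ∀ j, Module.End k (U j)) i T) := rfl

/-- For `L = ⟨x, y⟩`, `E = L × ⋯ × L` and a nontrivial irreducible tensor-product
module `V = U_1 ⊗ ⋯ ⊗ U_t` with some `dim U_i ≥ 4`, the diagonal elements `x_1, y_1, z_1`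
with coordinates `x`, `y`, `(x y)⁻¹` satisfy
`dim C_V(x_1) + dim C_V(y_1) + dim C_V(z_1) ≤ (9/8) dim V`; in particular the minimum
of the three is at most `(3/8) dim V`. -/
theorem diagonal_fixed_space_bound {k L : Type*} [Field k] [IsAlgClosed k] [Group L]
    {t : ℕ} (x y : L) (hgen : Subgroup.closure ({x, y} : Set L) = ⊤)
    (U : Fin t → Type*) [∀ i, AddCommGroup (U i)] [∀ i, Module k (U i)]
    [∀ i, FiniteDimensional k (U i)]
    (ρ : ∀ i, Representation k L (U i))
    (hUirr : ∀ i, ∀ W : Submodule k (U i), (∀ g v, v ∈ W → ρ i g v ∈ W) → W = ⊥ ∨ W = ⊤)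
    (hVirr : ∀ W : Submodule k (⨂[k] i, U i),
      (∀ f v, v ∈ W → piTensorRep ρ f v ∈ W) → W = ⊥ ∨ W = ⊤)
    (hVnontriv : ¬ ∀ (f : Fin t → L) (v : ⨂[k] i, U i), piTensorRep ρ f v = v)
    (hbig : ∃ i, 4 ≤ finrank k (U i)) :
    8 * (finrank k (LinearMap.ker (piTensorRep ρ (fun _ => x) - 1)) +
         finrank k (LinearMap.ker (piTensorRep ρ (fun _ => y) - 1)) +
         finrank k (LinearMap.ker (piTensorRep ρ (fun _ => (x * y)⁻¹) - 1)))
      ≤ 9 * finrank k (⨂[k] i, U i) ∧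
    8 * min (finrank k (LinearMap.ker (piTensorRep ρ (fun _ => x) - 1)))
        (min (finrank k (LinearMap.ker (piTensorRep ρ (fun _ => y) - 1)))
          (finrank k (LinearMap.ker (piTensorRep ρ (fun _ => (x * y)⁻¹) - 1))))
      ≤ 3 * finrank k (⨂[k] i, U i) := by
  classical
  obtain ⟨i, hi⟩ := hbig
  have : Nontrivial (U i) := Module.nontrivial_of_finrank_pos (R := k) (by omega)
  let e := Module.finBasis k (U i)
  let m := LinearMap.toMatrixAlgEquiv e
  let α := (slotHom (k := k) (U := U) i).comp m.symm.toAlgHom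
  let r : L → Matrix _ _ k := fun g => m (ρ i g)
  -- The action of a diagonal element on the factors other than the `i`-th one.
  let o : L → Module.End k (⨂[k] i, U i) :=
    fun g => piTensorRep ρ (Function.update (fun _ => g) i 1)
  have hspan : Submodule.span k (Set.range r) = ⊤ := by
    have h := congrArg (Submodule.map m.toLinearMap) (span_range_eq_top (ρ i) (hUirr i))
    have hm : LinearMap.range m.toLinearMap = ⊤ := LinearMap.range_eq_top.mpr m.surjective
    rw [Submodule.map_span, Submodule.map_top, hm, ← Set.range_comp] at h
    exact h
  have hαr : ∀ g, α (r g) = slotHom i (ρ i g) := fun g => by simp [α, r]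
  have hcomm' : ∀ g T, slotHom i T * o g = o g * slotHom i T := by
    intro g T
    change slotHom i T * PiTensorProduct.map _ = PiTensorProduct.map _ * slotHom i T
    rw [slotHom_apply, ← PiTensorProduct.map_mul, ← PiTensorProduct.map_mul]
    congr 1
    ext1 j
    rcases eq_or_ne j i with rfl | h
    · simp
    · simp [h]
  have hcomm : ∀ g M v, α M (o g⁻¹ v) = o g⁻¹ (α M v) := fun g M v =>
    LinearMap.congr_fun (hcomm' g⁻¹ (m.symm M)) v
  have hdiag : ∀ g, piTensorRep ρ (fun _ => g) = slotHom i (ρ i g) * o g := by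
    intro g
    change PiTensorProduct.map _ = slotHom i _ * PiTensorProduct.map _
    rw [slotHom_apply, ← PiTensorProduct.map_mul]
    congr 1
    ext1 j
    rcases eq_or_ne j i with rfl | h
    · simp
    · simp [h]
  have ho : ∀ g, o g * o g⁻¹ = 1 := by
    intro g
    rw [← map_mul, ← map_one (piTensorRep ρ)]
    congr 1
    ext1 j
    rcases eq_or_ne j i with rfl | h
    · simp
    · simp [h]
  have hslot : ∀ g, slotHom i (ρ i g) = piTensorRep ρ (fun _ => g) * o g⁻¹ := fun g => by
    rw [hdiag, mul_assoc, ho, mul_one]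
  have hslot' : ∀ g, slotHom i (ρ i g) = o g⁻¹ * piTensorRep ρ (fun _ => g) := fun g => by
    rw [hdiag, ← mul_assoc, ← hcomm', mul_assoc]
    have h := ho g⁻¹
    rw [inv_inv] at h
    rw [h, mul_one]
  let D : Representation k L (⨂[k] i, U i) :=
    (piTensorRep ρ).comp (MonoidHom.pi fun _ => MonoidHom.id L)
  have hD : ∀ g, piTensorRep ρ (fun _ => g) = D g := fun _ => rfl
  simp only [hD] at hslot hslot'
  have hz : LinearMap.ker (D (x * y)⁻¹ - 1) = LinearMap.ker (D x * D y - 1) := by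
    rw [← map_mul]
    ext v
    simp only [LinearMap.mem_ker, LinearMap.sub_apply, Module.End.one_apply, sub_eq_zero]
    constructor
    · intro h
      have h' := congrArg (D (x * y)) h
      rw [← Module.End.mul_apply, ← map_mul, mul_inv_cancel, map_one] at h'
      exact h'.symm
    · intro h
      have h' := congrArg (D (x * y)⁻¹) h
      rw [← Module.End.mul_apply, ← map_mul, inv_mul_cancel, map_one] at h'
      exact h'.symm
  have hfix : ∀ g, ∀ v ∈ LinearMap.ker (D x - 1) ⊓ LinearMap.ker (D y - 1), D g v = v := by
    rintro g v ⟨hx, hy⟩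
    rw [SetLike.mem_coe, LinearMap.mem_ker, LinearMap.sub_apply, Module.End.one_apply,
      sub_eq_zero] at hx hy
    have hg : g ∈ Subgroup.closure ({x, y} : Set L) := hgen ▸ Subgroup.mem_top g
    induction hg using Subgroup.closure_induction with
    | mem g hg =>
      rcases hg with rfl | rfl
      · exact hx
      · exact hy
    | one => simp
    | mul g h _ _ hg hh => rw [map_mul, Module.End.mul_apply, hh, hg]
    | inv g _ hg =>
      have h := congrArg (D g⁻¹) hg
      rw [← Module.End.mul_apply, ← map_mul, inv_mul_cancel, map_one] at h
      exact h.symm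
  have hfix' : ∀ g, ∀ φ ∈ (LinearMap.range (D x - 1) ⊔ LinearMap.range (D y - 1)).dualAnnihilator,
      ∀ v, φ (D g v) = φ v := by
    intro g φ hφ
    rw [Submodule.mem_dualAnnihilator] at hφ
    have hx : ∀ v, φ (D x v) = φ v := fun v => by
      have h := hφ _ (Submodule.mem_sup_left ⟨v, rfl⟩)
      rwa [LinearMap.sub_apply, Module.End.one_apply, map_sub, sub_eq_zero] at h
    have hy : ∀ v, φ (D y v) = φ v := fun v => by
      have h := hφ _ (Submodule.mem_sup_right ⟨v, rfl⟩)
      rwa [LinearMap.sub_apply, Module.End.one_apply, map_sub, sub_eq_zero] at h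
    have hg : g ∈ Subgroup.closure ({x, y} : Set L) := hgen ▸ Subgroup.mem_top g
    induction hg using Subgroup.closure_induction with
    | mem g hg =>
      rcases hg with rfl | rfl
      · exact hx
      · exact hy
    | one => simp
    | mul g h _ _ hg hh =>
      intro v
      rw [map_mul, Module.End.mul_apply, hg, hh]
    | inv g _ hg =>
      intro v
      have h := hg (D g⁻¹ v)
      rw [← Module.End.mul_apply, ← map_mul, mul_inv_cancel, map_one] at h
      exact h.symm
  have hF := mul_finrank_le α r (fun g => o g⁻¹) hspan hcomm
    (LinearMap.ker (D x - 1) ⊓ LinearMap.ker (D y - 1)) (fun g f hf => by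
      rw [hαr, hslot', Module.End.mul_apply, hfix g f hf])
  have hF' := mul_finrank_dual_le α r (fun g => o g⁻¹) hspan hcomm
    (LinearMap.range (D x - 1) ⊔ LinearMap.range (D y - 1)).dualAnnihilator
    (fun g f hf v => by rw [hαr, hslot, Module.End.mul_apply, hfix' g f hf])
  have hscott := scott_lemma (D x) (D y)
  rw [← hz] at hscott
  rw [Fintype.card_fin] at hF hF'
  have h16 : ∀ a n : ℕ, finrank k (U i) * (finrank k (U i) * a) ≤ n → 16 * a ≤ n := by
    intro a n h
    refine le_trans ?_ h
    calc 16 * a = 4 * (4 * a) := by ring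
      _ ≤ _ := by gcongr
  have h1 := h16 _ _ hF
  have h2 := h16 _ _ hF'
  have key : ∀ a b c f g n : ℕ, 16 * f ≤ n → 16 * g ≤ n → a + b + c ≤ n + f + g →
      8 * (a + b + c) ≤ 9 * n ∧ 8 * min a (min b c) ≤ 3 * n := by
    intro a b c f g n _ _ _
    constructor <;> omega
  -- `D g` unfolds to the diagonal operator, so the bounds agree with the goal definitionally.
  exact key _ _ _ _ _ _ h1 h2 hscott
end

section
/- Let n be an odd prime, k an algebraically closed field of characteristic p, and N ≤ GL_n(k) a finite abelian normal noncentral subgroup of an irreducible finite group G ≤ GL_n(k), with N an elementary abelian 2-group, p odd, and 2 a multiplicative generator modulo n. Then |N·Z/Z| = 2^{n-1} where Z is the subgroup of scalars in N, and there exists x ∈ N such that −x is a reflection, hence dim C_V(x) = 1 ≤ (1/3)·n. -/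
/-!
The elements of `N` are commuting involutions and `2 ≠ 0` in `k`, so `V = k^n` is the direct sum of
the weight spaces of `N`. By irreducibility `G` permutes the nonzero weight spaces transitively, so
they all have the same dimension; as `n` is prime and `N` is not scalar, there are `n` of them, each
a line (`exists_weight_basis`). In a basis of weight vectors `N` becomes a binary code
`M ≤ 𝔽₂^n`: record the signs of `x ∈ N` on the `n` lines. Constant words are the scalars in `N`.

By Cauchy's theorem some `g ∈ G` permutes the lines in one `n`-cycle (`exists_smul_cycle`), so `M`
is a cyclic code, that is, an ideal of `𝔽₂[X]` containing `X^n - 1 = Φ_n (X - 1)`. Since `2`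
generates `(ℤ/n)ˣ`, the polynomial `Φ_n` is irreducible over `𝔽₂`. The code has a nonconstant word,
so the ideal is not inside `(Φ_n)`, hence contains `X - 1`. As `Φ_n(1) = n = 1` in `𝔽₂`, it also
contains `Φ_n - 1`, which is the word with a single `0` (`one_sub_single_mem`). Such a word is an
`x ∈ N` with `-x` a reflection. Subtracting the entry at a fixed coordinate `x₀` from the others
sends the words with a single `0` at `x ≠ x₀` to the standard basis of `𝔽₂^(n-1)`, so this map on
`M` is onto, and its kernel is the scalars in `N`; this gives the order of `N`.
-/

open Module

section

open Polynomial

/-- The irreducible factors of `Φ_n` over `𝔽₂` have degree the order of `2` modulo `n`. -/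
theorem irreducible_cyclotomic_two {n : ℕ} (hn : n.Prime) (hodd : Odd n)
    (h2 : orderOf (2 : ZMod n) = n - 1) : Irreducible (cyclotomic n (ZMod 2)) := by
  have h2n : ¬ 2 ∣ n := by simpa [← even_iff_two_dvd] using hodd
  refine ZMod.irreducible_of_dvd_cyclotomic_of_natDegree h2n dvd_rfl ?_
  rw [natDegree_cyclotomic, Nat.totient_prime hn, ← h2, ← orderOf_units]
  simp

/-- A group acting transitively on a set of prime size has an element acting as a single cycle. -/
theorem exists_smul_cycle {G X : Type*} [Group G] [MulAction G X] [Fintype X]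
    [MulAction.IsPretransitive G X] (hX : (Fintype.card X).Prime) :
    ∃ g : G, (∀ x : X, g ^ Fintype.card X • x = x) ∧
      ∀ x y : X, ∃ i < Fintype.card X, g ^ i • x = y := by
  classical
  have : Fact (Fintype.card X).Prime := ⟨hX⟩
  obtain ⟨x₀⟩ : Nonempty X := Fintype.card_pos_iff.mp hX.pos
  let H := (MulAction.toPermHom G X).range
  have hdvd : Fintype.card X ∣ Nat.card H := by
    have : MulAction.IsPretransitive H X := ⟨fun x y => by
      obtain ⟨g, hg⟩ := MulAction.exists_smul_eq G x y
      exact ⟨⟨_, g, rfl⟩, hg⟩⟩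
    rw [← Nat.card_eq_fintype_card, ← MulAction.index_stabilizer_of_transitive H x₀]
    exact Subgroup.index_dvd_card _
  obtain ⟨⟨σ, g, rfl⟩, hσ⟩ := exists_prime_orderOf_dvd_card' _ hdvd
  set σ := MulAction.toPermHom G X g with hσdef
  replace hσ : orderOf σ = Fintype.card X := (Subgroup.orderOf_coe _).trans hσ
  have hc : σ.IsCycle := Equiv.Perm.isCycle_of_prime_order'' hX hσ
  have hs : σ.support = Finset.univ :=
    Finset.eq_univ_of_card _ (hc.orderOf.symm.trans hσ)
  have hmem : ∀ x, σ x ≠ x := fun x => Equiv.Perm.mem_support.mp (hs ▸ Finset.mem_univ x)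
  refine ⟨g, fun x => ?_, fun x y => ?_⟩
  · have h := pow_orderOf_eq_one σ
    rw [hσ, hσdef, ← map_pow] at h
    exact congr($h x)
  obtain ⟨i, hi, h⟩ := (hc.sameCycle (hmem x) (hmem y)).exists_pow_eq'
  refine ⟨i, hσ ▸ hi, ?_⟩
  rw [hσdef, ← map_pow] at h
  exact h

/-- A cyclic code of length `n` over `𝔽₂` with a nonconstant word contains every word with exactly
one zero. The cyclic shift is the permutation `σ`. -/
theorem one_sub_single_mem {n : ℕ} (hn : n.Prime) (hodd : Odd n)
    (h2 : orderOf (2 : ZMod n) = n - 1) {Ω : Type*} [Fintype Ω] [DecidableEq Ω]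
    (hX : Fintype.card Ω = n) (σ : Equiv.Perm Ω)
    (hσn : ∀ x, (σ ^ n) x = x) (hσ : ∀ x y, ∃ i < n, (σ ^ i) x = y)
    (M : Submodule (ZMod 2) (Ω → ZMod 2)) (hM : ∀ v ∈ M, v ∘ σ ∈ M)
    (hnc : ∃ v ∈ M, ∃ x y, v x ≠ v y) (x₀ : Ω) :
    (fun x => if x = x₀ then 0 else 1) ∈ M := by
  set L : Module.End (ZMod 2) (Ω → ZMod 2) := LinearMap.funLeft _ _ σ with hL
  have hLpow : ∀ (i : ℕ) v x, (L ^ i) v x = v ((σ ^ i) x) := by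
    intro i
    induction i with
    | zero => intro v x; rfl
    | succ i ih => intro v x; rw [pow_succ, pow_succ', Module.End.mul_apply, ih]; rfl
  have hMp : ∀ (p : (ZMod 2)[X]), ∀ v ∈ M, aeval L p v ∈ M := by
    intro p
    induction p using Polynomial.induction_on' with
    | add p q hp hq => intro v hv; simpa using M.add_mem (hp v hv) (hq v hv)
    | monomial i c =>
      intro v hv
      rw [aeval_monomial]
      have : ∀ i : ℕ, (L ^ i) v ∈ M := by
        intro i
        induction i with
        | zero => simpa using hv
        | succ i ih => rw [pow_succ', Module.End.mul_apply]; exact hM _ ih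
      simpa [Algebra.algebraMap_eq_smul_one] using M.smul_mem c (this i)
  let δ : Ω → ZMod 2 := Pi.single x₀ 1
  -- the code, seen as an ideal of polynomials
  let I : Ideal (ZMod 2)[X] :=
    { carrier := {p | aeval L p δ ∈ M}
      add_mem' := fun {p q} hp hq => by simpa using M.add_mem hp hq
      zero_mem' := by simp
      smul_mem' := fun c p hp => by
        simpa [Module.End.mul_apply] using hMp c _ hp }
  -- `δ` generates the whole space of words as a module over polynomials
  have hsurj : ∀ v : Ω → ZMod 2, ∃ p : (ZMod 2)[X], aeval L p δ = v := by
    intro v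
    have hs : ∀ x, ∃ p : (ZMod 2)[X], aeval L p δ = Pi.single x 1 := by
      intro x
      obtain ⟨i, -, hi⟩ := hσ x x₀
      refine ⟨X ^ i, funext fun y => ?_⟩
      rw [aeval_X_pow, hLpow]
      simp only [δ, Pi.single_apply, ← hi, EmbeddingLike.apply_eq_iff_eq]
    choose P hP using hs
    refine ⟨∑ x, C (v x) * P x, ?_⟩
    ext y
    simp [hP, Algebra.algebraMap_eq_smul_one, Pi.single_apply]
  have hpoly : cyclotomic n (ZMod 2) * (X - 1) = X ^ n - 1 := by
    have := Fact.mk hn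
    exact cyclotomic_prime_mul_X_sub_one _ _
  have hnot : ¬ I ≤ Ideal.span {cyclotomic n (ZMod 2)} := by
    intro hle
    obtain ⟨v, hv, x, y, hxy⟩ := hnc
    obtain ⟨p, rfl⟩ := hsurj v
    obtain ⟨q, rfl⟩ := Ideal.mem_span_singleton.mp (hle (show p ∈ I from hv))
    -- multiples of `Φ_n` are killed by `L - 1`, hence shift-invariant, hence constant
    set w := aeval L (cyclotomic n (ZMod 2) * q) δ with hw
    have hfix : ∀ z, w (σ z) = w z := by
      intro z
      have : aeval L (X - 1 : (ZMod 2)[X]) w = 0 := by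
        rw [hw, ← Module.End.mul_apply, ← map_mul,
          show (X - 1) * (cyclotomic n (ZMod 2) * q) = (X ^ n - 1) * q by rw [← hpoly]; ring,
          map_mul, Module.End.mul_apply]
        ext z
        simp [hLpow, hσn]
      have := congrFun this z
      simpa [hL, LinearMap.funLeft_apply, sub_eq_zero] using this
    have hfix' : ∀ (i : ℕ) z, w ((σ ^ i) z) = w z := by
      intro i
      induction i with
      | zero => intro z; rfl
      | succ i ih => intro z; rw [pow_succ', Equiv.Perm.mul_apply, hfix, ih]
    obtain ⟨i, -, rfl⟩ := hσ x y
    exact hxy (hfix' i x).symm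
  have hX1 : (X - 1 : (ZMod 2)[X]) ∈ I := by
    have hmem : cyclotomic n (ZMod 2) * (X - 1) ∈ I := by
      change aeval L _ δ ∈ M
      have : aeval L (cyclotomic n (ZMod 2) * (X - 1)) δ = 0 := by
        rw [hpoly]; ext z; simp [hLpow, hσn]
      rw [this]; exact M.zero_mem
    obtain ⟨p, hpI, hp⟩ := Set.not_subset.mp hnot
    have hcop : IsCoprime (cyclotomic n (ZMod 2)) p :=
      (irreducible_cyclotomic_two hn hodd h2).coprime_iff_not_dvd.mpr
        fun h => hp (Ideal.mem_span_singleton.mpr h)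
    obtain ⟨a, b, hab⟩ := hcop
    have : (X - 1 : (ZMod 2)[X]) = a * (cyclotomic n (ZMod 2) * (X - 1)) + (b * (X - 1)) * p := by
      linear_combination (-(X - 1 : (ZMod 2)[X])) * hab
    rw [this]
    exact I.add_mem (I.mul_mem_left _ hmem) (I.mul_mem_left _ hpI)
  -- `Φ_n(1) = n = 1` in `𝔽₂`
  have hdvd : (X - 1 : (ZMod 2)[X]) ∣ cyclotomic n (ZMod 2) - 1 := by
    have := Fact.mk hn
    have h1 : (X - 1 : (ZMod 2)[X]) = X - C 1 := by simp
    rw [h1, dvd_iff_isRoot, IsRoot, eval_sub, eval_one_cyclotomic_prime]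
    simp [(ZMod.natCast_eq_one_iff_odd).mpr hodd]
  have hfin : cyclotomic n (ZMod 2) - 1 ∈ I := I.mem_of_dvd hdvd hX1
  -- `Φ_n(L) δ` is the sum of all shifts of `δ`, the all-ones word
  have hval : aeval L (cyclotomic n (ZMod 2) - 1) δ = fun x => if x = x₀ then 0 else 1 := by
    have := Fact.mk hn
    ext y
    have hsum : ∑ i ∈ Finset.range n, δ ((σ ^ i) y) = ∑ z, δ z := by
      have himg : (Finset.range n).image (fun i => (σ ^ i) y) = Finset.univ := by
        ext z; simpa using hσ y z
      rw [← himg, Finset.sum_image]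
      apply Finset.injOn_of_card_image_eq
      rw [himg]; simp [hX]
    have : ∑ z, δ z = 1 := by simp [δ]
    rw [this] at hsum
    rw [map_sub, LinearMap.sub_apply, Pi.sub_apply, cyclotomic_prime, map_sum]
    simp only [map_pow, aeval_X, LinearMap.sum_apply, Finset.sum_apply, hLpow, hsum]
    by_cases h : y = x₀ <;> simp [δ, h]
  rw [← hval]
  exact hfin

/-- Let `f` be a family of commuting involutions of a space of prime dimension `n`, not all scalar,
permuted under conjugation by an irreducible group `G`. Then the weights of `f` form a transitive
`G`-set `X` of size `n`, and there is a basis of simultaneous eigenvectors indexed by `X`. -/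
theorem exists_weight_basis {n : ℕ} (hn : n.Prime) {K V G A : Type*} [Field K] [IsAlgClosed K]
    (hK : (2 : K) ≠ 0) [AddCommGroup V] [Module K V] (hV : finrank K V = n)
    [Group G] [Finite G] [MulAction G A] (ρ : G →* End K V) (f : A → End K V)
    (hfc : ∀ a b, Commute (f a) (f b)) (hf2 : ∀ a, f a * f a = 1)
    (hρf : ∀ g a, ρ g * f a = f (g • a) * ρ g)
    (hirr : ∀ W : Submodule K V, (∀ g, ∀ v ∈ W, ρ g v ∈ W) → W = ⊥ ∨ W = ⊤)
    (hns : ¬ ∀ a, ∃ c : K, ∀ v, f a v = c • v) :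
    ∃ (X : Set (A → K)) (_ : Fintype X) (_ : MulAction G X) (b : Basis X K V),
      MulAction.IsPretransitive G X ∧ Fintype.card X = n ∧
      (∀ (g : G) (x : X) a, (g • x).1 a = x.1 (g⁻¹ • a)) ∧
      ∀ (x : X) a, f a (b x) = x.1 a • b x := by
  classical
  let : MulAction G (A → K) := arrowAction
  have hact : ∀ (g : G) (χ : A → K) a, (g • χ) a = χ (g⁻¹ • a) := fun _ _ _ => rfl
  have hfd : FiniteDimensional K V := FiniteDimensional.of_finrank_pos (hV ▸ hn.pos)
  have hnt : Nontrivial V := nontrivial_of_finrank_pos (R := K) (hV ▸ hn.pos)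
  have hss : ∀ a, (f a).IsSemisimple := fun a => by
    refine End.isSemisimple_of_squarefree_aeval_eq_zero (p := X ^ 2 - C 1)
      (separable_X_pow_sub_C (1 : K) (by exact_mod_cast hK) one_ne_zero).squarefree ?_
    simp [sq, hf2]
  let W : (A → K) → Submodule K V := fun χ => ⨅ a, (f a).eigenspace (χ a)
  have hWmem : ∀ χ v, v ∈ W χ ↔ ∀ a, f a v = χ a • v := by simp [W]
  have hWgen : W = fun χ => ⨅ a, (f a).maxGenEigenspace (χ a) := by
    ext1 χ
    simp only [W, fun a => (hss a).isFinitelySemisimple.maxGenEigenspace_eq_eigenspace (χ a)]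
  have hind : iSupIndep W := by
    rw [hWgen]
    exact End.independent_iInf_maxGenEigenspace_of_forall_mapsTo f fun i j φ =>
      End.mapsTo_maxGenEigenspace_of_comm (hfc j i) φ
  have hsup : ⨆ χ, W χ = ⊤ := by
    rw [hWgen]
    exact End.iSup_iInf_maxGenEigenspace_eq_top_of_iSup_maxGenEigenspace_eq_top_of_commute f
      (fun i j _ => hfc i j) fun a => End.iSup_maxGenEigenspace_eq_top (f a)
  obtain ⟨χ₀, hχ₀⟩ : ∃ χ, W χ ≠ ⊥ := by
    by_contra! h
    simp [h] at hsup
  have hmap : ∀ g χ v, v ∈ W χ → ρ g v ∈ W (g • χ) := by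
    intro g χ v hv
    rw [hWmem] at hv ⊢
    intro a
    have h1 := congr($(hρf g (g⁻¹ • a)) v)
    simp only [End.mul_apply, smul_inv_smul, hv, map_smul] at h1
    exact h1.symm
  let Ω : Set (A → K) := MulAction.orbit G χ₀
  have hfin : Finite Ω := Set.finite_range _
  let : Fintype Ω := Fintype.ofFinite _
  -- the sum over one orbit of weights is `G`-invariant and nonzero
  have htop : ⨆ x : Ω, W x = ⊤ := by
    refine (hirr _ ?_).resolve_left ?_
    · intro g v hv
      have : ⨆ x : Ω, W x ≤ (⨆ x : Ω, W x).comap (ρ g) :=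
        iSup_le fun x v hv => Submodule.mem_iSup_of_mem (g • x) (hmap g x v hv)
      exact this hv
    · intro h
      exact hχ₀ (iSup_eq_bot.mp h ⟨χ₀, MulAction.mem_orbit_self χ₀⟩)
  have hint : DirectSum.IsInternal fun x : Ω => W x :=
    DirectSum.isInternal_submodule_of_iSupIndep_of_iSup_eq_top
      (hind.comp Subtype.val_injective) htop
  have hρinj : ∀ g, Function.Injective (ρ g) := fun g v w h => by
    have h1 := congrArg (ρ g⁻¹) h
    simpa [← End.mul_apply, ← map_mul] using h1
  have hle : ∀ g χ, finrank K (W χ) ≤ finrank K (W (g • χ)) := fun g χ =>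
    LinearMap.finrank_le_finrank_of_injective
      (f := (ρ g).restrict (p := W χ) (q := W (g • χ)) (hmap g χ))
      fun v w h => Subtype.ext (hρinj g (congrArg Subtype.val h))
  have hdim : ∀ x : Ω, finrank K (W x) = finrank K (W χ₀) := by
    rintro ⟨_, g, rfl⟩
    refine le_antisymm ?_ (hle g χ₀)
    have h := hle g⁻¹ (g • χ₀)
    rwa [inv_smul_smul] at h
  have hcard : Fintype.card Ω * finrank K (W χ₀) = n := by
    rw [← hV, finrank_eq_card_basis
      (hint.collectedBasis fun x => finBasisOfFinrankEq K (W x) (hdim x))]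
    simp
  have hd : finrank K (W χ₀) = 1 := by
    rcases (Nat.prime_mul_iff.mp (hcard ▸ hn)) with h | h
    · exact h.2
    · -- a single weight space means that every `f a` is a scalar
      exfalso
      have : Subsingleton Ω := Fintype.card_le_one_iff_subsingleton.mp h.2.le
      have hW : W χ₀ = ⊤ := by
        rw [eq_top_iff, ← htop]
        refine iSup_le fun x => ?_
        rw [Subsingleton.elim x ⟨χ₀, MulAction.mem_orbit_self χ₀⟩]
      exact hns fun a => ⟨χ₀ a, fun v => (hWmem χ₀ v).mp (hW ▸ Submodule.mem_top) a⟩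
  let b := (hint.collectedBasis fun x =>
    finBasisOfFinrankEq K (W x) ((hdim x).trans hd)).reindex (Equiv.sigmaUnique Ω _)
  have hb : ∀ x : Ω, b x ∈ W x := fun x => by
    have := hint.collectedBasis_mem
      (fun x => finBasisOfFinrankEq K (W x) ((hdim x).trans hd)) ⟨x, 0⟩
    rw [Basis.reindex_apply]
    exact this
  refine ⟨Ω, inferInstance, inferInstance, b, inferInstance, by simpa [hd] using hcard,
    fun g x a => rfl, fun x a => (hWmem _ _).mp (hb x) a⟩


end

/-- Let `n` be an odd prime, `k` algebraically closed of odd characteristic, `G ≤ GL_n(k)`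
finite irreducible, and `N ≤ G` a normal noncentral elementary abelian `2`-subgroup.
If `2` is a multiplicative generator modulo `n`, then `N` modulo its subgroup `Z` of
scalars has order `2^(n-1)`, and there is `x ∈ N` such that `-x` is a reflection, so
`dim C_V(x) = 1 ≤ (1/3) n`. -/
theorem two_group_reflection {n : ℕ} (hn : n.Prime) (hodd : Odd n)
    {k : Type*} [Field k] [IsAlgClosed k] (hp : Odd (ringChar k))
    (G N : Subgroup (Matrix.GeneralLinearGroup (Fin n) k)) [Finite G]
    (hirr : ∀ W : Submodule k (Fin n → k),
      (∀ g ∈ G, ∀ v ∈ W, Matrix.toLin' ((g : Matrix (Fin n) (Fin n) k)) v ∈ W) →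
      W = ⊥ ∨ W = ⊤)
    (hNG : N ≤ G)
    (hnormal : ∀ g ∈ G, ∀ x ∈ N, g * x * g⁻¹ ∈ N)
    (helem : ∀ x ∈ N, x * x = 1)
    (hnoncentral : ¬ N ≤ Subgroup.center (Matrix.GeneralLinearGroup (Fin n) k))
    (h2gen : orderOf (2 : ZMod n) = n - 1) :
    Nat.card N = 2 ^ (n - 1) *
      Nat.card (N ⊓ Subgroup.center (Matrix.GeneralLinearGroup (Fin n) k) :
        Subgroup (Matrix.GeneralLinearGroup (Fin n) k)) ∧
    ∃ x ∈ N,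
      finrank k (LinearMap.ker
        (Matrix.toLin' (-((x : Matrix (Fin n) (Fin n) k))) - 1)) = n - 1 ∧
      finrank k (LinearMap.ker
        (Matrix.toLin' ((x : Matrix (Fin n) (Fin n) k)) - 1)) = 1 ∧
      3 * 1 ≤ n := by
  classical
  have hk2 : (2 : k) ≠ 0 := by
    intro h
    have h1 : ringChar k ∣ 2 := (ringChar.spec k 2).mp (by exact_mod_cast h)
    rcases (Nat.dvd_prime Nat.prime_two).mp h1 with h2 | h2
    · exact CharP.ringChar_ne_one h2
    · rw [h2] at hp; exact absurd hp (by decide)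
  have hneg : (-1 : k) ≠ 1 := fun h => hk2 (by linear_combination -h)
  have hn3 : 3 ≤ n := by
    have := hn.two_le
    rcases hodd with ⟨m, rfl⟩
    omega
  let τ : Matrix.GeneralLinearGroup (Fin n) k →* End k (Fin n → k) :=
    (Matrix.toLinAlgEquiv' : Matrix (Fin n) (Fin n) k ≃ₐ[k] _).toMonoidHom.comp (Units.coeHom _)
  have hτ : ∀ x, τ x = Matrix.toLin' (x : Matrix (Fin n) (Fin n) k) := fun _ => rfl
  have hτinj : Function.Injective τ := fun x y h =>
    Units.ext (Matrix.toLinAlgEquiv'.injective h)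
  let ρ : G →* End k (Fin n → k) := τ.comp G.subtype
  let f : N →* End k (Fin n → k) := τ.comp N.subtype
  let : MulAction G N :=
    { smul := fun g x => ⟨g * x * g⁻¹, hnormal g g.2 x x.2⟩
      one_smul := fun x => Subtype.ext (by
        change (1 : Matrix.GeneralLinearGroup (Fin n) k) * x * 1⁻¹ = x
        simp)
      mul_smul := fun g h x => Subtype.ext (by
        change ((g : Matrix.GeneralLinearGroup (Fin n) k) * h) * x * (g * h)⁻¹
          = g * (h * x * h⁻¹) * g⁻¹
        simp [mul_assoc]) }
  have hsmul : ∀ (g : G) (a : N), ((g • a : N) : Matrix.GeneralLinearGroup (Fin n) k)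
      = g * a * (g : Matrix.GeneralLinearGroup (Fin n) k)⁻¹ := fun _ _ => rfl
  have hN2 : ∀ a : N, a * a = 1 := fun a => Subtype.ext (helem a a.2)
  have hNcomm : ∀ a b : N, a * b = b * a := fun a b =>
    (Commute.of_orderOf_dvd_two (fun a : N => orderOf_dvd_of_pow_eq_one (by rw [sq, hN2])) a b)
  have hscalar : ∀ (a : N) (c : k), (∀ v, f a v = c • v) →
      (a : Matrix.GeneralLinearGroup (Fin n) k) ∈ Subgroup.center _ := by
    intro a c h
    rw [Subgroup.mem_center_iff]
    intro g
    apply hτinj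
    have h' : ∀ v, τ a v = c • v := h
    rw [map_mul, map_mul]
    refine LinearMap.ext fun v => ?_
    simp [h']
  obtain ⟨X, _, _, b, hpre, hXcard, hact, hb⟩ := exists_weight_basis hn hk2
    (by simp) ρ f
    (fun a b => by rw [commute_iff_eq, ← map_mul, hNcomm, map_mul])
    (fun a => by rw [← map_mul, hN2, map_one])
    (fun g a => by
      change τ g * τ a = τ ((g • a : N) : Matrix.GeneralLinearGroup (Fin n) k) * τ g
      rw [← map_mul, ← map_mul, hsmul, inv_mul_cancel_right])
    (fun W h => hirr W fun g hg v hv => h ⟨g, hg⟩ v hv)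
    (fun h => hnoncentral fun a ha => by
      obtain ⟨c, hc⟩ := h ⟨a, ha⟩
      exact hscalar ⟨a, ha⟩ c hc)
  -- a central element commutes with `G`, so its eigenvalues agree along the orbit of weights
  have hcent : ∀ a : N, (a : Matrix.GeneralLinearGroup (Fin n) k) ∈ Subgroup.center _ ↔
      ∀ x y : X, x.1 a = y.1 a := by
    intro a
    constructor
    · intro h x y
      obtain ⟨g, rfl⟩ := MulAction.exists_smul_eq G x y
      rw [hact]
      refine congrArg x.1 (Subtype.ext ?_)
      rw [hsmul, (Subgroup.mem_center_iff.mp h _), mul_inv_cancel_right]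
    · intro h
      obtain ⟨x₀⟩ : Nonempty X := Fintype.card_pos_iff.mp (by rw [hXcard]; exact hn.pos)
      refine hscalar a (x₀.1 a) fun v => ?_
      have : f a = x₀.1 a • LinearMap.id := b.ext fun x => by simp [hb, h x x₀]
      rw [this]; rfl
  have hmul : ∀ (x : X) (a c : N), x.1 (a * c) = x.1 a * x.1 c := by
    intro x a c
    apply smul_left_injective k (b.ne_zero x)
    simp only
    rw [← hb, map_mul, End.mul_apply, hb, map_smul, hb, smul_smul, mul_comm]
  have hone : ∀ x : X, x.1 1 = 1 := by
    intro x
    apply smul_left_injective k (b.ne_zero x)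
    simp only
    rw [← hb, map_one, End.one_apply, one_smul]
  have hpm : ∀ (x : X) (a : N), x.1 a = 1 ∨ x.1 a = -1 := fun x a =>
    mul_self_eq_one_iff.mp (by rw [← hmul, hN2, hone])
  -- the binary word of `a`: entry `0` where `a` acts as `1`, entry `1` where it acts as `-1`
  let Φ : Additive N →+ (X → ZMod 2) := AddMonoidHom.mk'
    (fun a x => if x.1 a.toMul = 1 then 0 else 1) (fun a c => by
      ext1 x
      simp only [toMul_add, hmul, Pi.add_apply]
      rcases hpm x a.toMul with h | h <;> rcases hpm x c.toMul with h' | h' <;>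
        simp [h, h', hneg, CharTwo.add_self_eq_zero])
  have hΦ : ∀ (a : N) (x y : X), Φ (.ofMul a) x = Φ (.ofMul a) y ↔ x.1 a = y.1 a := by
    intro a x y
    simp only [Φ, AddMonoidHom.mk'_apply, toMul_ofMul]
    rcases hpm x a with h | h <;> rcases hpm y a with h' | h' <;> simp [h, h', hneg, hneg.symm]
  have hrefl : ∀ x₀ : X, ∃ a : N, Φ (.ofMul a) = fun x => if x = x₀ then 0 else 1 := by
    intro x₀
    obtain ⟨g, hgn, hg⟩ := exists_smul_cycle (G := G) (X := X) (by rw [hXcard]; exact hn)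
    rw [hXcard] at hgn hg
    have hpow : ∀ (i : ℕ) (x : X), (MulAction.toPerm g ^ i : Equiv.Perm X) x = g ^ i • x := by
      intro i x
      rw [← MulAction.toPermHom_apply, ← map_pow]; rfl
    have := one_sub_single_mem hn hodd h2gen hXcard (MulAction.toPerm g)
      (fun x => by rw [hpow, hgn])
      (fun x y => by simpa only [hpow] using hg x y)
      (AddSubgroup.toZModSubmodule 2 Φ.range)
      (by
        rintro _ ⟨a, rfl⟩
        refine ⟨.ofMul (g⁻¹ • a.toMul), ?_⟩
        ext1 x
        simp [Φ, hact])
      (by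
        obtain ⟨a, ha, hac⟩ := SetLike.not_le_iff_exists.mp hnoncentral
        have := (hcent ⟨a, ha⟩).not.mp hac
        push Not at this
        obtain ⟨x, y, hxy⟩ := this
        exact ⟨_, ⟨.ofMul ⟨a, ha⟩, rfl⟩, x, y, fun h => hxy ((hΦ _ x y).mp h)⟩)
      x₀
    obtain ⟨a, ha⟩ := this
    exact ⟨a.toMul, ha⟩
  obtain ⟨x₀⟩ : Nonempty X := Fintype.card_pos_iff.mp (by rw [hXcard]; exact hn.pos)
  refine ⟨?_, ?_⟩
  · -- `D` subtracts the entry at `x₀`; on `N` its kernel consists of the scalars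
    let D : (X → ZMod 2) →+ ({x : X // x ≠ x₀} → ZMod 2) := AddMonoidHom.mk'
      (fun v x => v x - v x₀) (fun v w => by ext1 x; simp only [Pi.add_apply]; ring)
    let Ψ := (D.comp Φ)
    have hker : Nat.card Ψ.ker = Nat.card (N ⊓ Subgroup.center
        (Matrix.GeneralLinearGroup (Fin n) k) : Subgroup _) := by
      have hmem : ∀ a : N, Additive.ofMul a ∈ Ψ.ker ↔
          (a : Matrix.GeneralLinearGroup (Fin n) k) ∈ Subgroup.center _ := by
        intro a
        rw [hcent, AddMonoidHom.mem_ker]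
        constructor
        · intro h
          have hx : ∀ x : X, x.1 a = x₀.1 a := by
            intro x
            by_cases hx : x = x₀
            · rw [hx]
            · exact (hΦ a x x₀).mp (sub_eq_zero.mp (congrFun h ⟨x, hx⟩))
          exact fun x y => (hx x).trans (hx y).symm
        · intro h
          ext1 x
          exact sub_eq_zero.mpr ((hΦ a x x₀).mpr (h _ _))
      refine Nat.card_congr
        ⟨fun a => ⟨a.1.toMul.1, a.1.toMul.2, (hmem a.1.toMul).mp a.2⟩,
          fun a => ⟨.ofMul ⟨a.1, a.2.1⟩, (hmem _).mpr a.2.2⟩, fun _ => rfl, fun _ => rfl⟩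
    -- the word with a single `0` at `x ≠ x₀` is mapped to the basis vector at `x`
    have hsurj : Ψ.range = ⊤ := by
      rw [eq_top_iff]
      intro w _
      have hw : w = ∑ x, w x • (Pi.single x 1 : {x : X // x ≠ x₀} → ZMod 2) := by
        ext y; simp [Pi.single_apply]
      rw [hw, ← AddSubgroup.mem_toZModSubmodule (n := 2)]
      refine Submodule.sum_mem _ fun x _ => Submodule.smul_mem _ _ ?_
      obtain ⟨a, ha⟩ := hrefl x
      refine ⟨.ofMul a, ?_⟩
      ext y
      have hx : x₀ ≠ x := x.2.symm
      by_cases hyx : y = x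
      · simp [Ψ, D, ha, hx, hyx]
      · have : (y : X) ≠ x := fun h => hyx (Subtype.ext h)
        simp [Ψ, D, ha, hx, hyx, this]
    have h1 := Ψ.ker.card_mul_index
    rw [AddSubgroup.index_ker, hsurj, hker] at h1
    have h2 : Nat.card (⊤ : AddSubgroup ({x : X // x ≠ x₀} → ZMod 2)) = 2 ^ (n - 1) := by
      rw [AddSubgroup.card_top]
      simp [Nat.card_eq_fintype_card, Fintype.card_subtype_compl, hXcard]
    rw [h2] at h1
    rw [mul_comm, h1]
    rfl
  · obtain ⟨a, ha⟩ := hrefl x₀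
    have hx₀ : x₀.1 a = 1 := by
      have := congrFun ha x₀
      by_contra h
      simp [Φ, h] at this
    have hx : ∀ x, x ≠ x₀ → x.1 a = -1 := by
      intro x hx
      refine (hpm x a).resolve_left fun h => ?_
      have := congrFun ha x
      simp [Φ, h, hx] at this
    have hrepr : ∀ v x, b.repr (f a v) x = x.1 a * b.repr v x := by
      intro v x
      have : (Finsupp.lapply x ∘ₗ b.repr.toLinearMap) ∘ₗ f a
          = x.1 a • (Finsupp.lapply x ∘ₗ b.repr.toLinearMap) := b.ext fun y => by
        by_cases hxy : y = x
        · subst hxy; simp [hb]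
        · simp [hb, hxy]
      exact congr($this v)
    refine ⟨a, a.2, ?_, ?_, by omega⟩
    · have : LinearMap.ker (Matrix.toLin' (-((a : Matrix.GeneralLinearGroup (Fin n) k) :
          Matrix (Fin n) (Fin n) k)) - 1) = LinearMap.ker (b.coord x₀) := by
        ext v
        rw [LinearMap.mem_ker, LinearMap.mem_ker, map_neg, ← hτ]
        change -(f a v) - v = 0 ↔ _
        rw [← b.repr.map_eq_zero_iff, Finsupp.ext_iff]
        simp only [map_sub, map_neg, Finsupp.sub_apply, Finsupp.neg_apply, hrepr,
          Finsupp.coe_zero, Pi.zero_apply, Basis.coord_apply]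
        constructor
        · intro h
          have := h x₀
          rw [hx₀] at this
          exact (mul_eq_zero.mp (show (2 : k) * _ = 0 by linear_combination -this)).resolve_left hk2
        · intro h x
          by_cases hxx : x = x₀
          · rw [hxx, h]; ring
          · rw [hx x hxx]; ring
      rw [this]
      have h1 := LinearMap.finrank_range_add_finrank_ker (b.coord x₀)
      rw [LinearMap.range_eq_top.mpr fun c => ⟨c • b x₀, by simp⟩] at h1
      simp at h1
      omega
    · have : LinearMap.ker (Matrix.toLin' ((a : Matrix.GeneralLinearGroup (Fin n) k) :
          Matrix (Fin n) (Fin n) k) - 1) = Submodule.span k {b x₀} := by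
        ext v
        rw [LinearMap.mem_ker, ← hτ, Submodule.mem_span_singleton]
        change f a v - v = 0 ↔ _
        constructor
        · intro h
          refine ⟨b.repr v x₀, b.repr.injective (Finsupp.ext fun x => ?_)⟩
          by_cases hxx : x = x₀
          · simp [hxx]
          · have h1 := hrepr v x
            rw [sub_eq_zero.mp h, hx x hxx] at h1
            have : b.repr v x = 0 :=
              (mul_eq_zero.mp (show (2 : k) * _ = 0 by linear_combination h1)).resolve_left hk2
            simp [this, Ne.symm hxx]
        · rintro ⟨c, rfl⟩
          rw [map_smul, hb, hx₀, one_smul, sub_self]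
      rw [this, finrank_span_singleton (b.ne_zero x₀)]
end

section
/- Let G be a finite group, k a field whose characteristic does not divide |G|, and V, W finite-dimensional kG-modules. Then the characteristic polynomial functions ch_V, ch_W : G → k[x], defined by ch_V(g) = det(x·I − g|_V), coincide if and only if V and W have the same composition factors (with multiplicity). -/
/-!
Maschke's theorem makes `A = k[G]` semisimple, so `V` and `W` are finite direct sums of simple
modules `T i` taken from a list without repetition up to isomorphism, and it suffices to recover
from `g ↦ charpoly (g | V)` the multiplicity `m i` of each `T i` in `V`.

*Multiplicities modulo the characteristic.* The trace of an element `x` on `V` is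
`∑ i, m i * tr (x | T i)`, and the traces of the group elements determine those of all `x ∈ A`.
For each `i` some `x` annihilates every `T j` with `j ≠ i` and has nonzero trace on `T i`
(`exists_trace_ne_zero`). Such an `x` comes from `T i`, realised as a left ideal: every
element of it kills the simple modules not isomorphic to it, a property preserved by right
multiplication by group elements; translating a nonzero element in this way gives such an `x` with
nonzero coefficient at `1`. The trace of `x` on the regular module is `|G|` times that coefficient, hence
nonzero, and only summands isomorphic to `T i` contribute to it. This works over every field in
which `|G|` is invertible: no algebraic closure or Schur index is involved. Hence `m i`, as an
element of `k`, depends only on the traces.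

*Exact multiplicities.* In characteristic zero that is enough. In characteristic `p`, two
candidates `m`, `m'` for the multiplicities are congruent modulo `p`; write `m = p a + r` and
`m' = p b + r`. Cancelling `∏ c_i ^ r_i` from the equality of the products of characteristic
polynomials `∏ c_i ^ m_i` leaves an equality of `p`-th powers, and injectivity of Frobenius on
`k[X]` gives the same hypothesis for the smaller families `a` and `b`
(`eq_of_forall_prod_pow_eq`).
-/

open Module

/-! ### Characteristic polynomials and decompositions of modules over an algebra -/

section Algebra

variable {k : Type*} [Field k] {A : Type*} [Ring A] [Algebra k A]

/-- The characteristic polynomial over `k` of multiplication by `x ∈ A` on an `A`-module. -/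
noncomputable def smulCharpoly (k : Type*) [Field k] {A : Type*} [Ring A] [Algebra k A]
    (M : Type*) [AddCommGroup M] [Module k M] [Module A M] [IsScalarTower k A M]
    [FiniteDimensional k M] (x : A) : Polynomial k :=
  (Algebra.lsmul k k M x).charpoly

lemma smulCharpoly_congr {M N : Type*}
    [AddCommGroup M] [Module k M] [Module A M] [IsScalarTower k A M] [FiniteDimensional k M]
    [AddCommGroup N] [Module k N] [Module A N] [IsScalarTower k A N] [FiniteDimensional k N]
    (e : M ≃ₗ[A] N) (x : A) : smulCharpoly k M x = smulCharpoly k N x := by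
  unfold smulCharpoly
  rw [← (e.restrictScalars k).charpoly_conj]
  congr 1
  ext v
  simp [LinearEquiv.conj_apply]

lemma smulCharpoly_monic (M : Type*)
    [AddCommGroup M] [Module k M] [Module A M] [IsScalarTower k A M] [FiniteDimensional k M]
    (x : A) : (smulCharpoly k M x).Monic :=
  LinearMap.charpoly_monic _

lemma nextCoeff_smulCharpoly (M : Type*)
    [AddCommGroup M] [Module k M] [Module A M] [IsScalarTower k A M] [FiniteDimensional k M]
    (x : A) : (smulCharpoly k M x).nextCoeff = -LinearMap.trace k M (Algebra.lsmul k k M x) := by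
  rw [smulCharpoly, LinearMap.charpoly_def, LinearMap.trace_eq_matrix_trace k (Free.chooseBasis k M),
    Matrix.trace_eq_neg_charpoly_nextCoeff, neg_neg]

lemma smulCharpoly_pi {n : ℕ} (M : Fin n → Type*) [∀ i, AddCommGroup (M i)]
    [∀ i, Module k (M i)] [∀ i, Module A (M i)] [∀ i, IsScalarTower k A (M i)]
    [∀ i, FiniteDimensional k (M i)] (x : A) :
    smulCharpoly k (∀ i, M i) x = ∏ i, smulCharpoly k (M i) x := by
  induction n with
  | zero =>
    rw [Finset.univ_eq_empty, Finset.prod_empty]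
    refine (smulCharpoly_monic _ x).natDegree_eq_zero.mp ?_
    rw [smulCharpoly, LinearMap.charpoly_natDegree]
    exact finrank_zero_of_subsingleton
  | succ n ih =>
    rw [Fin.prod_univ_succ, ← ih fun i => M i.succ, ← smulCharpoly_congr (Fin.consLinearEquiv A M)]
    rw [smulCharpoly, smulCharpoly, smulCharpoly, ← LinearMap.charpoly_prodMap]
    congr 1

/-- A module which is a direct sum of members `T (f j)` of a family is determined by the
cardinalities of the fibres of `f`, which are the multiplicities of the `T i`. -/
lemma nonempty_equiv_of_card_fiber_eq {ι : Type*} [DecidableEq ι] (T : ι → Type*)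
    [∀ i, AddCommGroup (T i)] [∀ i, Module A (T i)] {n m : ℕ} (f : Fin n → ι) (f' : Fin m → ι)
    (h : ∀ i, Fintype.card {j // f j = i} = Fintype.card {j // f' j = i}) :
    Nonempty ((∀ j, T (f j)) ≃ₗ[A] ∀ j, T (f' j)) := by
  obtain ⟨e, he⟩ : ∃ e : Fin n ≃ Fin m, f = fun j => f' (e j) :=
    ⟨Equiv.ofFiberEquiv fun i => Fintype.equivOfCardEq (h i),
      funext fun j => (Equiv.ofFiberEquiv_map _ j).symm⟩
  subst he
  exact ⟨LinearEquiv.piCongrLeft A (fun j => T (f' j)) e⟩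

/-- There is a family of simple left ideals containing each isomorphism class of simple left ideals
exactly once. Over a semisimple ring these are all the simple modules. -/
lemma exists_simple_ideals.{u} (A : Type u) [Ring A] [IsSemisimpleRing A] :
    ∃ (ι : Type u) (T : ι → Ideal A), (∀ i, IsSimpleModule A (T i)) ∧
      (∀ i j, Nonempty (T i ≃ₗ[A] T j) → i = j) ∧
      ∀ I : Ideal A, IsSimpleModule A I → ∃ i, Nonempty (I ≃ₗ[A] T i) := by
  let s : Setoid {I : Ideal A // IsSimpleModule A I} :=
    { r := fun I J => Nonempty (I.1 ≃ₗ[A] J.1)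
      iseqv := ⟨fun _ => ⟨.refl _ _⟩, fun ⟨e⟩ => ⟨e.symm⟩, fun ⟨e⟩ ⟨e'⟩ => ⟨e.trans e'⟩⟩ }
  refine ⟨Quotient s, fun q => (Quotient.out q).1, fun q => (Quotient.out q).2,
    fun i j h => ?_, fun I hI => ?_⟩
  · exact Quotient.out_equiv_out.mp h
  · exact ⟨Quotient.mk s ⟨I, hI⟩, s.symm (Quotient.mk_out (s := s) ⟨I, hI⟩)⟩

lemma exists_equiv_pi [IsSemisimpleRing A] {ι : Type*} {T : ι → Ideal A}
    (hT : ∀ I : Ideal A, IsSimpleModule A I → ∃ i, Nonempty (I ≃ₗ[A] T i))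
    (M : Type*) [AddCommGroup M] [Module A M] [Module.Finite A M] :
    ∃ (n : ℕ) (f : Fin n → ι), Nonempty (M ≃ₗ[A] ∀ j, T (f j)) := by
  obtain ⟨n, S, e, hS⟩ := IsSemisimpleModule.exists_linearEquiv_fin_dfinsupp A M
  have key : ∀ j, ∃ i, Nonempty (S j ≃ₗ[A] T i) := fun j => by
    have := hS j
    obtain ⟨I, ⟨e'⟩⟩ := IsSemisimpleRing.exists_linearEquiv_ideal_of_isSimpleModule A (S j)
    obtain ⟨i, ⟨e''⟩⟩ := hT I (IsSimpleModule.congr e'.symm)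
    exact ⟨i, ⟨e'.trans e''⟩⟩
  choose f hf using key
  exact ⟨n, f, ⟨e.trans ((DFinsupp.linearEquivFunOnFintype (R := A)).trans
    (LinearEquiv.piCongrRight fun j => (hf j).some))⟩⟩

end Algebra

/-! ### Recovering exponents from their residues modulo the characteristic -/

/-- If the exponents of a relation among products of the `c i g` are always determined in `k`,
they are determined as natural numbers: in characteristic `p`, their common residues modulo `p`
cancel, and the remaining relation is a `p`-th power. -/
lemma eq_of_forall_prod_pow_eq {k ι X : Type*} [Field k] (t : Finset ι)
    (c : ι → X → Polynomial k) (hc : ∀ i x, c i x ≠ 0)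
    (hk : ∀ a b : ι → ℕ, (∀ x, ∏ i ∈ t, c i x ^ a i = ∏ i ∈ t, c i x ^ b i) →
      ∀ i ∈ t, (a i : k) = b i)
    (a b : ι → ℕ) (hab : ∀ x, ∏ i ∈ t, c i x ^ a i = ∏ i ∈ t, c i x ^ b i) :
    ∀ i ∈ t, a i = b i := by
  obtain ⟨p, hp⟩ := CharP.exists k
  obtain hpp | rfl := CharP.char_is_prime_or_zero k p
  · have : Fact p.Prime := ⟨hpp⟩
    have hmod : ∀ a b : ι → ℕ, (∀ x, ∏ i ∈ t, c i x ^ a i = ∏ i ∈ t, c i x ^ b i) →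
        ∀ i ∈ t, a i % p = b i % p := fun a b h i hi =>
      (CharP.natCast_eq_natCast k p).mp (hk a b h i hi)
    induction hN : ∑ i ∈ t, (a i + b i) using Nat.strong_induction_on generalizing a b with
    | _ N ih =>
    have hr := hmod a b hab
    -- the relation between the quotients by `p` of the exponents
    have hquot : ∀ x, ∏ i ∈ t, c i x ^ (a i / p) = ∏ i ∈ t, c i x ^ (b i / p) := fun x => by
      refine frobenius_inj (Polynomial k) p ?_
      have hne : ∏ i ∈ t, c i x ^ (a i % p) ≠ 0 :=
        Finset.prod_ne_zero_iff.mpr fun i _ => pow_ne_zero _ (hc i x)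
      refine mul_left_cancel₀ hne ?_
      have hsplit (m : ι → ℕ) : (∏ i ∈ t, c i x ^ (m i % p)) *
          frobenius (Polynomial k) p (∏ i ∈ t, c i x ^ (m i / p)) = ∏ i ∈ t, c i x ^ m i := by
        rw [frobenius_def, ← Finset.prod_pow, ← Finset.prod_mul_distrib]
        refine Finset.prod_congr rfl fun i _ => ?_
        rw [← pow_mul, ← pow_add, mul_comm, Nat.mod_add_div]
      rw [hsplit a, hab, ← hsplit b]
      congr 1
      exact Finset.prod_congr rfl fun i hi => by rw [hr i hi]
    obtain h0 | h0 := Nat.eq_zero_or_pos N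
    · rw [h0, Finset.sum_eq_zero_iff] at hN
      intro i hi
      have := hN i hi
      lia
    have hlt : ∑ i ∈ t, (a i / p + b i / p) < N := by
      obtain ⟨j, hj, hj0⟩ : ∃ j ∈ t, a j + b j ≠ 0 := by
        by_contra! h
        exact h0.ne' (hN ▸ Finset.sum_eq_zero h)
      rw [← hN]
      refine Finset.sum_lt_sum
        (fun i _ => add_le_add (Nat.div_le_self _ _) (Nat.div_le_self _ _)) ⟨j, hj, ?_⟩
      obtain ha | hb : 0 < a j ∨ 0 < b j := by lia
      · exact add_lt_add_of_lt_of_le (Nat.div_lt_self ha hpp.one_lt) (Nat.div_le_self _ _)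
      · exact add_lt_add_of_le_of_lt (Nat.div_le_self _ _) (Nat.div_lt_self hb hpp.one_lt)
    intro i hi
    rw [← Nat.mod_add_div (a i) p, ← Nat.mod_add_div (b i) p, hr i hi,
      ih _ hlt (fun i => a i / p) (fun i => b i / p) hquot rfl i hi]
  · have := CharP.charP_to_charZero k
    exact fun i hi => Nat.cast_injective (hk a b hab i hi)

/-! ### Modules over the group algebra -/

section GroupAlgebra

variable {k G : Type*} [Field k] [Group G]

lemma smulCharpoly_asModule {V : Type*} [AddCommGroup V] [Module k V] [FiniteDimensional k V]
    (ρ : Representation k G V) (g : G) :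
    smulCharpoly k ρ.asModule (MonoidAlgebra.single g (1 : k)) = (ρ g).charpoly := by
  rw [smulCharpoly, ← ρ.asModuleEquiv.charpoly_conj]
  congr 1
  ext v
  simp [LinearEquiv.conj_apply, -Representation.single_smul,
    Representation.asModuleEquiv_map_smul, Representation.asAlgebraHom_single]

variable [Finite G]

lemma trace_lsmul_self (x : MonoidAlgebra k G) :
    LinearMap.trace k (MonoidAlgebra k G) (Algebra.lsmul k k (MonoidAlgebra k G) x) =
      Nat.card G * x.coeff 1 := by
  classical
  have := Fintype.ofFinite G
  rw [LinearMap.trace_eq_matrix_trace k (MonoidAlgebra.basis G k), Matrix.trace]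
  simp [LinearMap.toMatrix_apply, MonoidAlgebra.basis]

/-- Each simple module `T i` has an element of the group algebra that detects it: it kills every
other simple module and has nonzero trace on `T i`. The trace is nonzero because the trace of the
regular module is `|G|` times the coefficient at `1`. -/
lemma exists_trace_ne_zero (hG : (Nat.card G : k) ≠ 0) {ι : Type*}
    {T : ι → Ideal (MonoidAlgebra k G)} (hs : ∀ i, IsSimpleModule (MonoidAlgebra k G) (T i))
    (hinj : ∀ i j, Nonempty (T i ≃ₗ[MonoidAlgebra k G] T j) → i = j)
    (hT : ∀ I : Ideal (MonoidAlgebra k G), IsSimpleModule (MonoidAlgebra k G) I →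
      ∃ i, Nonempty (I ≃ₗ[MonoidAlgebra k G] T i)) (i : ι) :
    ∃ x : MonoidAlgebra k G, (∀ j, j ≠ i → Algebra.lsmul k k (T j) x = 0) ∧
      LinearMap.trace k (T i) (Algebra.lsmul k k (T i) x) ≠ 0 := by
  have : NeZero (Nat.card G : k) := ⟨hG⟩
  have := IsSimpleModule.nontrivial (MonoidAlgebra k G) (T i)
  obtain ⟨a, ha⟩ := exists_ne (0 : T i)
  obtain ⟨g, hg⟩ : ∃ g, a.1.coeff g ≠ 0 := by
    by_contra! h
    exact ha (Subtype.ext (MonoidAlgebra.ext (Finsupp.ext h)))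
  have hx : ∀ j, j ≠ i → Algebra.lsmul k k (T j) (a.1 * MonoidAlgebra.single g⁻¹ 1) = 0 := by
    intro j hj
    ext1 t
    -- right multiplication by `s` is a homomorphism `T i → T j`, zero by Schur's lemma
    have hkill (s : T j) : a.1 • s = 0 := by
      have := hs i
      have := hs j
      let φ : T i →ₗ[MonoidAlgebra k G] T j :=
        (LinearMap.toSpanSingleton _ _ s).comp (T i).subtype
      obtain h | h := φ.bijective_or_eq_zero
      · exact absurd (hinj i j ⟨.ofBijective φ h⟩).symm hj
      · exact DFunLike.congr_fun h a
    simpa [mul_smul] using hkill (MonoidAlgebra.single g⁻¹ (1 : k) • t)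
  refine ⟨_, hx, fun h0 => ?_⟩
  -- otherwise the trace on every simple module, hence on the regular module, vanishes
  have hall : ∀ j, LinearMap.trace k (T j)
      (Algebra.lsmul k k (T j) (a.1 * MonoidAlgebra.single g⁻¹ 1)) = 0 := fun j => by
    obtain rfl | hj := eq_or_ne j i
    · exact h0
    · rw [hx j hj, map_zero]
  obtain ⟨n, f, ⟨e⟩⟩ := exists_equiv_pi hT (MonoidAlgebra k G)
  have h1 := congrArg Polynomial.nextCoeff
    (smulCharpoly_congr (k := k) e (a.1 * MonoidAlgebra.single g⁻¹ 1))
  rw [smulCharpoly_pi, Polynomial.Monic.nextCoeff_prod _ _ fun j _ => smulCharpoly_monic _ _,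
    nextCoeff_smulCharpoly, trace_lsmul_self] at h1
  simp only [nextCoeff_smulCharpoly, hall] at h1
  simp [hg, hG] at h1

/-- A relation among products of the characteristic polynomials of group elements on the `T i`
determines the exponents in `k`, provided elements as in `exists_trace_ne_zero` exist: compare
traces, extend to the group algebra by linearity, and evaluate at these elements. -/
lemma natCast_eq_of_prod_pow_eq {ι : Type*} {T : ι → Ideal (MonoidAlgebra k G)}
    (hx : ∀ i, ∃ x : MonoidAlgebra k G, (∀ j, j ≠ i → Algebra.lsmul k k (T j) x = 0) ∧
      LinearMap.trace k (T i) (Algebra.lsmul k k (T i) x) ≠ 0)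
    (t : Finset ι) (a b : ι → ℕ)
    (hab : ∀ g : G, ∏ i ∈ t, smulCharpoly k (T i) (MonoidAlgebra.single g (1 : k)) ^ a i =
      ∏ i ∈ t, smulCharpoly k (T i) (MonoidAlgebra.single g (1 : k)) ^ b i) :
    ∀ i ∈ t, (a i : k) = b i := by
  have hlin : ∑ i ∈ t, ((a i : k) - b i) •
      (LinearMap.trace k (T i) ∘ₗ (Algebra.lsmul k k (T i)).toLinearMap) =
      (0 : MonoidAlgebra k G →ₗ[k] k) := by
    refine MonoidAlgebra.lhom_ext' fun g => LinearMap.ext_ring ?_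
    have h := congrArg Polynomial.nextCoeff (hab g)
    rw [Polynomial.Monic.nextCoeff_prod _ _ fun i _ => (smulCharpoly_monic _ _).pow _,
      Polynomial.Monic.nextCoeff_prod _ _ fun i _ => (smulCharpoly_monic _ _).pow _] at h
    simp only [(smulCharpoly_monic _ _).nextCoeff_pow, nextCoeff_smulCharpoly, smul_neg,
      Finset.sum_neg_distrib, neg_inj, nsmul_eq_mul] at h
    simpa [sub_mul, sub_eq_zero] using h
  intro i hi
  obtain ⟨x, hx0, hxi⟩ := hx i
  have h := DFunLike.congr_fun hlin x
  simp only [LinearMap.sum_apply, LinearMap.smul_apply, LinearMap.comp_apply,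
    AlgHom.toLinearMap_apply, LinearMap.zero_apply] at h
  rw [Finset.sum_eq_single i (fun j _ hj => by rw [hx0 j hj]; simp) (fun hi' => absurd hi hi'),
    smul_eq_mul] at h
  exact sub_eq_zero.mp ((mul_eq_zero.mp h).resolve_right hxi)

lemma nonempty_equiv_of_smulCharpoly_eq (hG : (Nat.card G : k) ≠ 0) (M N : Type*)
    [AddCommGroup M] [Module k M] [Module (MonoidAlgebra k G) M]
    [IsScalarTower k (MonoidAlgebra k G) M] [FiniteDimensional k M]
    [AddCommGroup N] [Module k N] [Module (MonoidAlgebra k G) N]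
    [IsScalarTower k (MonoidAlgebra k G) N] [FiniteDimensional k N]
    (h : ∀ g : G, smulCharpoly k M (MonoidAlgebra.single g (1 : k)) =
      smulCharpoly k N (MonoidAlgebra.single g (1 : k))) :
    Nonempty (M ≃ₗ[MonoidAlgebra k G] N) := by
  classical
  have : NeZero (Nat.card G : k) := ⟨hG⟩
  have : Module.Finite (MonoidAlgebra k G) M := .of_restrictScalars_finite k _ _
  have : Module.Finite (MonoidAlgebra k G) N := .of_restrictScalars_finite k _ _
  obtain ⟨ι, T, hs, hinj, hT⟩ := exists_simple_ideals (MonoidAlgebra k G)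
  obtain ⟨n, f, ⟨e⟩⟩ := exists_equiv_pi hT M
  obtain ⟨m, f', ⟨e'⟩⟩ := exists_equiv_pi hT N
  let t := Finset.univ.image f ∪ Finset.univ.image f'
  have hprod {l : ℕ} (u : Fin l → ι) (hu : ∀ j, u j ∈ t) (g : G) :
      ∏ i ∈ t, smulCharpoly k (T i) (MonoidAlgebra.single g (1 : k)) ^
        Fintype.card {j // u j = i} =
      smulCharpoly k (∀ j, T (u j)) (MonoidAlgebra.single g (1 : k)) := by
    rw [smulCharpoly_pi, ← Finset.prod_fiberwise_of_maps_to' (t := t) (fun j _ => hu j)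
      fun i => smulCharpoly k (T i) (MonoidAlgebra.single g (1 : k))]
    simp [Fintype.card_subtype]
  have hft (j) : f j ∈ t := by simp [t]
  have hft' (j) : f' j ∈ t := by simp [t]
  have hcard := eq_of_forall_prod_pow_eq t
    (fun i g => smulCharpoly k (T i) (MonoidAlgebra.single g (1 : k)))
    (fun i g => (smulCharpoly_monic _ _).ne_zero)
    (natCast_eq_of_prod_pow_eq (exists_trace_ne_zero hG hs hinj hT) t)
    (fun i => Fintype.card {j // f j = i}) (fun i => Fintype.card {j // f' j = i})
    fun g => by
      rw [hprod f hft, hprod f' hft', ← smulCharpoly_congr e, ← smulCharpoly_congr e', h]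
  obtain ⟨e''⟩ := nonempty_equiv_of_card_fiber_eq (A := MonoidAlgebra k G) (fun i => T i) f f'
    fun i => by
      by_cases hi : i ∈ t
      · exact hcard i hi
      · have : IsEmpty {j // f j = i} := ⟨fun j => hi (j.2 ▸ hft j.1)⟩
        have : IsEmpty {j // f' j = i} := ⟨fun j => hi (j.2 ▸ hft' j.1)⟩
        simp
  exact ⟨e.trans (e''.trans e'.symm)⟩

end GroupAlgebra

/-- For a finite group `G` whose order is invertible in `k`, two finite-dimensional
`kG`-modules have the same characteristic polynomial function `g ↦ det(x·I − g)` if and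
only if they have the same composition factors with multiplicity — equivalently, since
`kG` is semisimple by Maschke's theorem, if and only if they are isomorphic as
`kG`-modules. -/
theorem charpoly_eq_iff_iso {k G V W : Type*} [Field k] [Group G] [Finite G]
    (hcoprime : (Nat.card G : k) ≠ 0)
    [AddCommGroup V] [Module k V] [FiniteDimensional k V]
    [AddCommGroup W] [Module k W] [FiniteDimensional k W]
    (ρ : Representation k G V) (σ : Representation k G W) :
    (∀ g : G, (ρ g).charpoly = (σ g).charpoly) ↔
      ∃ e : V ≃ₗ[k] W, ∀ (g : G) (v : V), e (ρ g v) = σ g (e v) := by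
  constructor
  · intro h
    obtain ⟨e⟩ := nonempty_equiv_of_smulCharpoly_eq hcoprime ρ.asModule σ.asModule fun g => by
      rw [smulCharpoly_asModule, smulCharpoly_asModule, h]
    refine ⟨ρ.asModuleEquiv.symm.trans ((e.restrictScalars k).trans σ.asModuleEquiv),
      fun g v => ?_⟩
    simp [-Representation.single_smul, Representation.asModuleEquiv_map_smul,
      Representation.asAlgebraHom_single]
  · rintro ⟨e, he⟩ g
    rw [← e.charpoly_conj]
    congr 1
    ext w
    simp [LinearEquiv.conj_apply, he]
end
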